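/- For every non-empty family 𝓕 of finite graphs, each having at least one edge, either sat(n,𝓕) → ∞ as n → ∞, or there exist an integer m and an integer N such that sat(n,𝓕) = m for all n ≥ N. -/

import Mathlib

/-!
A graph with at most `m` edges lives on `2 * m` vertices up to isolated ones. If `sat n 𝓕 ≤ m`
for infinitely many `n`, the pigeonhole principle therefore gives one graph `H` on `2 * m` vertices
that is `𝓕`-saturated after adding isolated vertices, for infinitely many numbers of them. As soon
as there are two isolated vertices, every non-edge looks like a non-edge of the smallest such
padding, so the number of isolated vertices does not matter for saturation as long as no member of
`𝓕` appears, and none appears because larger paddings are `𝓕`-free. Hence `sat n 𝓕 ≤ m` for all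
large `n`, and a sequence of natural numbers with this property for every `m` either tends to
infinity or is eventually constant.
-/

open SimpleGraph Filter Topology

/-- `H` (on `β`) is contained in `G` (on `α`): `G` has a subgraph isomorphic to `H`. -/
def Contains {α β : Type*} (G : SimpleGraph α) (H : SimpleGraph β) : Prop :=
  ∃ f : β ↪ α, ∀ a b : β, H.Adj a b → G.Adj (f a) (f b)

/-- A family of finite graphs, each given on a vertex set `Fin n`. -/
abbrev GraphFam := Set ((n : ℕ) × SimpleGraph (Fin n))

/-- `G` is `𝓕`-saturated: `G` contains no member of `𝓕`, but adding any missing edge to `G`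
creates a member of `𝓕`. -/
def FamSaturated (𝓕 : GraphFam) {α : Type*} (G : SimpleGraph α) : Prop :=
  (∀ F ∈ 𝓕, ¬ Contains G F.2) ∧
    ∀ u v : α, u ≠ v → ¬ G.Adj u v →
      ∃ F ∈ 𝓕, Contains (G ⊔ SimpleGraph.fromEdgeSet {s(u, v)}) F.2

/-- `sat n 𝓕` is the minimum number of edges in an `𝓕`-saturated graph on `n` vertices. -/
noncomputable def sat (n : ℕ) (𝓕 : GraphFam) : ℕ :=
  sInf {m | ∃ G : SimpleGraph (Fin n), FamSaturated 𝓕 G ∧ Nat.card G.edgeSet = m}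

theorem tendsto_atTop_or_exists_eventually_eq {ι : Type*} {l : Filter ι} {f : ι → ℕ}
    (h : ∀ m, (∃ᶠ i in l, f i ≤ m) → ∀ᶠ i in l, f i ≤ m) :
    Tendsto f l atTop ∨ ∃ m, ∀ᶠ i in l, f i = m := by
  classical
  by_cases hex : ∃ m, ∃ᶠ i in l, f i ≤ m
  · refine Or.inr ⟨Nat.find hex, ?_⟩
    have hge : ∀ᶠ i in l, Nat.find hex ≤ f i := by
      rcases hm : Nat.find hex with _ | m
      · exact Eventually.of_forall fun i => (f i).zero_le
      · have hmin : ¬ ∃ᶠ i in l, f i ≤ m := Nat.find_min hex (by lia)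
        exact (not_frequently.1 hmin).mono fun i => not_le.1
    filter_upwards [h _ (Nat.find_spec hex), hge] with i hle hge using hle.antisymm hge
  · push Not at hex
    exact Or.inl (tendsto_atTop.2 fun m => (hex m).mono fun i => le_of_lt)

section Graphs

variable {α β κ : Type*}

theorem exists_embedding_comp_eq_and_subset_range [Finite α] [Finite β] (f : κ ↪ α) (g : κ ↪ β)
    (s : Set β) (hs : (Set.range g ∪ s).ncard ≤ Nat.card α) (h : Nat.card α ≤ Nat.card β) :
    ∃ φ : α ↪ β, φ ∘ f = g ∧ s ⊆ Set.range φ := by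
  have := Fintype.ofFinite α
  have := Fintype.ofFinite β
  obtain ⟨t, hst, -, ht⟩ := Set.exists_subsuperset_card_eq (Set.subset_univ _) hs
    (by rwa [Set.ncard_univ])
  obtain ⟨t, rfl⟩ := t.toFinite.exists_finset_coe
  rw [Set.ncard_coe_finset, Nat.card_eq_fintype_card] at ht
  obtain ⟨e⟩ : Nonempty (α ↪ β) := Function.Embedding.nonempty_of_card_le (by simpa using h)
  -- `e` only supplies the values of the extension outside `Set.range f`, which are irrelevant.
  have hext (i : κ) : Function.extend f g e (f i) = g i := f.injective.extend_apply g e i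
  have hmaps : (Set.range f).MapsTo (Function.extend f g e) t := by
    rintro _ ⟨i, rfl⟩
    exact hext i ▸ hst (.inl ⟨i, rfl⟩)
  have hinj : (Set.range f).InjOn (Function.extend f g e) := by
    rintro _ ⟨i, rfl⟩ _ ⟨j, rfl⟩ hij
    rw [hext, hext] at hij
    rw [g.injective hij]
  obtain ⟨σ, hσ⟩ := hmaps.exists_equiv_extend_of_card_eq ht.symm hinj
  refine ⟨σ.toEmbedding.trans (.subtype _), funext fun i => (hσ _ ⟨i, rfl⟩).trans (hext i), ?_⟩
  exact fun b hb => ⟨σ.symm ⟨b, hst (.inr hb)⟩, by simp⟩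

theorem map_fromEdgeSet (f : α ↪ β) (s : Set (Sym2 α)) :
    (fromEdgeSet s).map f = fromEdgeSet (Sym2.map f '' s) := by
  have hdiag : Sym2.map f ⁻¹' Sym2.diagSet = Sym2.diagSet := by
    ext ⟨a, b⟩
    simp
  rw [← edgeSet_inj, edgeSet_map, edgeSet_fromEdgeSet, edgeSet_fromEdgeSet, ← hdiag]
  exact Set.image_sdiff_preimage

theorem map_sup_fromEdgeSet_pair (f : α ↪ β) (G : SimpleGraph α) (u v : α) :
    (G ⊔ fromEdgeSet {s(u, v)}).map f = G.map f ⊔ fromEdgeSet {s(f u, f v)} := by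
  have hgc : GaloisConnection (SimpleGraph.map f) (SimpleGraph.comap f) := map_le_iff_le_comap f
  rw [hgc.l_sup, map_fromEdgeSet, Set.image_singleton, Sym2.map_mk]

theorem map_comap_of_support_subset_range (f : α ↪ β) {G : SimpleGraph β}
    (h : G.support ⊆ Set.range f) : (G.comap f).map f = G := by
  refine (map_comap_le f G).antisymm fun u v huv => ?_
  obtain ⟨a, rfl⟩ := h ⟨v, huv⟩
  obtain ⟨b, rfl⟩ := h ⟨_, huv.symm⟩
  exact map_adj_apply.2 huv

theorem map_isContained_map [Finite α] [Finite β] (H : SimpleGraph κ) (f : κ ↪ α) (g : κ ↪ β)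
    (h : Nat.card α ≤ Nat.card β) : H.map f ⊑ H.map g := by
  have hcard : (Set.range g ∪ ∅).ncard ≤ Nat.card α := by
    rw [Set.union_empty, ← Nat.card_coe_set_eq, Nat.card_range_of_injective g.injective]
    exact Nat.card_le_card_of_injective f f.injective
  obtain ⟨φ, hφ, -⟩ := exists_embedding_comp_eq_and_subset_range f g ∅ hcard h
  rw [← hφ, ← SimpleGraph.map_map]
  exact (SimpleGraph.Embedding.map φ _).isContained

theorem card_edgeSet_map (f : α ↪ β) (G : SimpleGraph α) :
    Nat.card (G.map f).edgeSet = Nat.card G.edgeSet := by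
  rw [edgeSet_map]
  exact Nat.card_image_of_injective f.sym2Map.injective _

theorem ncard_support_le_two_mul_card_edgeSet [Finite α] (G : SimpleGraph α) :
    G.support.ncard ≤ 2 * Nat.card G.edgeSet := by
  classical
  have := Fintype.ofFinite α
  calc G.support.ncard = ∑ _v ∈ G.support, 1 := by
        rw [Set.ncard_eq_toFinset_card', Finset.card_eq_sum_ones]
    _ ≤ ∑ v ∈ G.support, G.degree v := Finset.sum_le_sum fun v hv => by
        rw [Set.mem_toFinset, ← degree_pos_iff_mem_support] at hv
        exact hv
    _ = 2 * Nat.card G.edgeSet := by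
        rw [sum_degrees_support_eq_twice_card_edges, edgeFinset_card, Nat.card_eq_fintype_card]

theorem exists_map_eq_of_two_mul_card_edgeSet_le [Finite α] [Finite κ] {G : SimpleGraph α}
    (hG : 2 * Nat.card G.edgeSet ≤ Nat.card κ) (hκ : Nat.card κ ≤ Nat.card α) :
    ∃ (H : SimpleGraph κ) (f : κ ↪ α), H.map f = G := by
  have hsupp : (Set.range (Function.Embedding.ofIsEmpty : Empty ↪ α) ∪ G.support).ncard ≤
      Nat.card κ := by
    rw [Set.range_eq_empty, Set.empty_union]
    exact (ncard_support_le_two_mul_card_edgeSet G).trans hG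
  obtain ⟨f, -, hf⟩ := exists_embedding_comp_eq_and_subset_range .ofIsEmpty _ _ hsupp hκ
  exact ⟨G.comap f, f, map_comap_of_support_subset_range f hf⟩

end Graphs

section Saturation

variable {α β κ : Type*} {𝓕 : GraphFam}

theorem contains_iff_isContained {G : SimpleGraph α} {H : SimpleGraph β} :
    Contains G H ↔ H ⊑ G :=
  ⟨fun ⟨f, hf⟩ => ⟨⟨⟨f, hf _ _⟩, f.injective⟩⟩,
    fun ⟨f⟩ => ⟨f.toEmbedding, fun _ _ => f.toHom.map_adj⟩⟩

/-- `G` is `𝓕`-free: it contains no member of `𝓕`. This is the first half of `FamSaturated`. -/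
def FamFree (𝓕 : GraphFam) (G : SimpleGraph α) : Prop :=
  ∀ F ∈ 𝓕, ¬ Contains G F.2

theorem FamFree.of_isContained {G : SimpleGraph α} {G' : SimpleGraph β} (hG : FamFree 𝓕 G)
    (h : G' ⊑ G) : FamFree 𝓕 G' := fun F hF hc =>
  hG F hF (contains_iff_isContained.2 ((contains_iff_isContained.1 hc).trans h))

theorem famFree_bot (h𝓕 : ∀ F ∈ 𝓕, 1 ≤ Nat.card F.2.edgeSet) :
    FamFree 𝓕 (⊥ : SimpleGraph α) := by
  rintro F hF ⟨_, hf⟩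
  have hbot : F.2 = ⊥ := eq_bot_iff.2 fun a b hab => hf a b hab
  simpa [hbot] using h𝓕 F hF

theorem FamSaturated.of_maximal_famFree {G : SimpleGraph α} (hG : Maximal (FamFree 𝓕) G) :
    FamSaturated 𝓕 G := by
  refine ⟨hG.prop, fun u v huv hadj => ?_⟩
  by_contra! hfree
  have hle : G ⊔ fromEdgeSet {s(u, v)} ≤ G := hG.le_of_ge hfree le_sup_left
  exact hadj (hle (by simp [huv]))

theorem exists_famSaturated [Finite α] (h𝓕 : ∀ F ∈ 𝓕, 1 ≤ Nat.card F.2.edgeSet) :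
    ∃ G : SimpleGraph α, FamSaturated 𝓕 G := by
  obtain ⟨G, hG⟩ := (Set.toFinite {G : SimpleGraph α | FamFree 𝓕 G}).exists_maximal
    ⟨⊥, famFree_bot h𝓕⟩
  exact ⟨G, .of_maximal_famFree hG⟩

theorem FamSaturated.map_of_famFree [Finite α] [Finite β] {H : SimpleGraph κ} {f : κ ↪ α}
    {g : κ ↪ β} (hsat : FamSaturated 𝓕 (H.map f)) (hfree : FamFree 𝓕 (H.map g))
    (hκ : Nat.card κ + 2 ≤ Nat.card α) (h : Nat.card α ≤ Nat.card β) :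
    FamSaturated 𝓕 (H.map g) := by
  refine ⟨hfree, fun u v huv hadj => ?_⟩
  have hcard : (Set.range g ∪ {u, v}).ncard ≤ Nat.card α :=
    calc (Set.range g ∪ {u, v}).ncard ≤ (Set.range g).ncard + ({u, v} : Set β).ncard :=
          Set.ncard_union_le _ _
      _ = Nat.card κ + 2 := by
          rw [Set.ncard_pair huv, ← Nat.card_coe_set_eq, Nat.card_range_of_injective g.injective]
      _ ≤ Nat.card α := hκ
  -- A copy of the smaller padding that covers `u` and `v` makes `u v` the image of a non-edge.
  obtain ⟨φ, hφ, hrange⟩ := exists_embedding_comp_eq_and_subset_range f g {u, v} hcard h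
  obtain ⟨a, rfl⟩ : u ∈ Set.range φ := hrange (by simp)
  obtain ⟨b, rfl⟩ : v ∈ Set.range φ := hrange (by simp)
  have hmap : H.map g = (H.map f).map φ := by rw [SimpleGraph.map_map, hφ]
  rw [hmap, map_adj_apply] at hadj
  obtain ⟨F, hF, hc⟩ := hsat.2 a b (ne_of_apply_ne φ huv) hadj
  refine ⟨F, hF, contains_iff_isContained.2 ((contains_iff_isContained.1 hc).trans ?_)⟩
  rw [hmap, ← map_sup_fromEdgeSet_pair]
  exact (SimpleGraph.Embedding.map φ _).isContained

theorem FamSaturated.sat_le {n : ℕ} {G : SimpleGraph (Fin n)} (hG : FamSaturated 𝓕 G) :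
    sat n 𝓕 ≤ Nat.card G.edgeSet :=
  Nat.sInf_le ⟨G, hG, rfl⟩

theorem exists_famSaturated_card_edgeSet_eq_sat (h𝓕 : ∀ F ∈ 𝓕, 1 ≤ Nat.card F.2.edgeSet)
    (n : ℕ) : ∃ G : SimpleGraph (Fin n), FamSaturated 𝓕 G ∧ Nat.card G.edgeSet = sat n 𝓕 := by
  obtain ⟨G, hG⟩ := exists_famSaturated (α := Fin n) h𝓕
  exact Nat.sInf_mem (s := {m | ∃ G : SimpleGraph (Fin n), FamSaturated 𝓕 G ∧
    Nat.card G.edgeSet = m}) ⟨_, G, hG, rfl⟩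

theorem exists_frequently_famSaturated_map (h𝓕 : ∀ F ∈ 𝓕, 1 ≤ Nat.card F.2.edgeSet) {m : ℕ}
    (hm : ∃ᶠ n in atTop, sat n 𝓕 ≤ m) :
    ∃ H : SimpleGraph (Fin (2 * m)), Nat.card H.edgeSet ≤ m ∧
      ∃ᶠ n in atTop, ∃ f : Fin (2 * m) ↪ Fin n, FamSaturated 𝓕 (H.map f) := by
  simp only [← frequently_and_distrib_left, ← frequently_exists]
  refine (hm.and_eventually (eventually_ge_atTop (2 * m))).mono fun n ⟨hnm, hn⟩ => ?_
  obtain ⟨G, hG, hcard⟩ := exists_famSaturated_card_edgeSet_eq_sat h𝓕 n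
  obtain ⟨H, f, rfl⟩ := exists_map_eq_of_two_mul_card_edgeSet_le (G := G) (κ := Fin (2 * m))
    (by rw [Nat.card_fin]; lia) (by simpa using hn)
  exact ⟨H, by rwa [← card_edgeSet_map f, hcard], f, hG⟩

theorem eventually_sat_le_of_frequently_sat_le (h𝓕 : ∀ F ∈ 𝓕, 1 ≤ Nat.card F.2.edgeSet) {m : ℕ}
    (hm : ∃ᶠ n in atTop, sat n 𝓕 ≤ m) : ∀ᶠ n in atTop, sat n 𝓕 ≤ m := by
  obtain ⟨H, hH, hsat⟩ := exists_frequently_famSaturated_map h𝓕 hm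
  obtain ⟨n₀, hn₀, f₀, hf₀⟩ := frequently_atTop.1 hsat (2 * m + 2)
  filter_upwards [eventually_ge_atTop n₀] with n hn
  obtain ⟨n₁, hn₁, f₁, hf₁⟩ := frequently_atTop.1 hsat n
  let g : Fin (2 * m) ↪ Fin n := f₀.trans (Fin.castLEEmb hn)
  have hfree : FamFree 𝓕 (H.map g) :=
    FamFree.of_isContained hf₁.1 (map_isContained_map H g f₁ (by simpa using hn₁))
  have hg : FamSaturated 𝓕 (H.map g) :=
    hf₀.map_of_famFree hfree (by simpa using hn₀) (by simpa using hn)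
  exact hg.sat_le.trans ((card_edgeSet_map g H).trans_le hH)

end Saturation

/-- For every non-empty family `𝓕` of graphs each having at least one edge, `sat(n,𝓕)` either
tends to infinity or is eventually constant. -/
theorem stmt4 (𝓕 : GraphFam) (h1 : 𝓕.Nonempty) (h2 : ∀ F ∈ 𝓕, 1 ≤ Nat.card F.2.edgeSet) :
    Tendsto (fun n => sat n 𝓕) atTop atTop ∨ ∃ m N : ℕ, ∀ n, N ≤ n → sat n 𝓕 = m := by
  simpa only [eventually_atTop] using tendsto_atTop_or_exists_eventually_eq fun _ =>
    eventually_sat_le_of_frequently_sat_le h2
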